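/- arXiv:1211.2941 — 2 statements merged into one kernel-verified Lean document; each statement's English description precedes it below -/
import Mathlib

section
/- Let L and S be positive integers with S = L+1, let γ ∈ (0,1) be the positive root of Lγ + Sγ² = 1, and let (ξ^j)_{j≥1} be the (L,S)-sequence of points. For each N, let P_{L,S}(N) = { ((n−1)/N, ξⁿ) : n = 1, …, N } be the (L,S)-point set à la van der Corput of order N. Then there exists a constant C₂ > 0 such that for every integer N ≥ 2 one has N · D₂(P_{L,S}(N)) ≤ C₂ · (log N)². -/
open Finset Real

noncomputable section

/-- The `k`-th digit of `n` in base `b`. -/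
def lsDigit (b n k : ℕ) : ℕ := n / b ^ k % b

/-- Membership in the set `N_{L,S}`: for every `k`, the pair of consecutive digits
`(a_k(n), a_{k+1}(n))` in base `L+S` does not lie in
`{L,…,L+S−1} × {1,…,L+S−1}`. -/
def memNLS (L S n : ℕ) : Prop :=
  ∀ k : ℕ, ¬ (L ≤ lsDigit (L + S) n k ∧ lsDigit (L + S) n k ≤ L + S - 1 ∧
      1 ≤ lsDigit (L + S) n (k + 1) ∧ lsDigit (L + S) n (k + 1) ≤ L + S - 1)

/-- The modified digit `ã`: `ã = a` if `a ≤ L−1`, and `ã = L + γ(a−L)` if `L ≤ a`. -/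
def lsTilde (L : ℕ) (γ : ℝ) (a : ℕ) : ℝ :=
  if a < L then (a : ℝ) else (L : ℝ) + γ * ((a : ℝ) - (L : ℝ))

/-- The radical-inverse-type function `φ_{L,S}(n) = Σ_{k=0}^{M} ã_k(n) γ^{k+1}`,
with `M = ⌊log_{L+S} n⌋`. -/
def lsPhi (L S : ℕ) (γ : ℝ) (n : ℕ) : ℝ :=
  ∑ k ∈ Finset.range (Nat.log (L + S) n + 1),
    lsTilde L γ (lsDigit (L + S) n k) * γ ^ (k + 1)

/-- The `(L,S)`-sequence of points: `ξ^j = φ_{L,S}(n_j)` where `n_1 < n_2 < ⋯`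
is the increasing enumeration of `N_{L,S}` (so `n_j = Nat.nth (memNLS L S) (j-1)`). -/
def lsSeq (L S : ℕ) (γ : ℝ) (j : ℕ) : ℝ :=
  lsPhi L S γ (Nat.nth (memNLS L S) (j - 1))

/-- One-dimensional discrepancy of the first `N` terms `x 1, …, x N` of a sequence:
`sup_{0 ≤ a < b ≤ 1} |(1/N) Σ_{j=1}^N χ_{[a,b)}(x j) − (b−a)|`. -/
def discrep (x : ℕ → ℝ) (N : ℕ) : ℝ :=
  ⨆ p : {p : ℝ × ℝ // 0 ≤ p.1 ∧ p.1 < p.2 ∧ p.2 ≤ 1},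
    |(∑ j ∈ Finset.Icc 1 N,
        Set.indicator (Set.Ico p.1.1 p.1.2) (fun _ => (1 : ℝ)) (x j)) / N
      - (p.1.2 - p.1.1)|

/-- Two-dimensional (star) discrepancy of the first `N` terms of a sequence of points
in the unit square:
`sup_{0 < a ≤ 1, 0 < b ≤ 1} |(1/N) Σ_{j=1}^N χ_{[0,a)×[0,b)}(x j) − ab|`. -/
def discrep2 (x : ℕ → ℝ × ℝ) (N : ℕ) : ℝ :=
  ⨆ p : {p : ℝ × ℝ // 0 < p.1 ∧ p.1 ≤ 1 ∧ 0 < p.2 ∧ p.2 ≤ 1},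
    |(∑ j ∈ Finset.Icc 1 N,
        Set.indicator (Set.Ico (0 : ℝ) p.1.1) (fun _ => (1 : ℝ)) (x j).1 *
        Set.indicator (Set.Ico (0 : ℝ) p.1.2) (fun _ => (1 : ℝ)) (x j).2) / N
      - p.1.1 * p.1.2|

lemma lsDigit_add_mul_zero {b a : ℕ} (ha : a < b) (n : ℕ) : lsDigit b (a + b * n) 0 = a := by
  simp [lsDigit, Nat.mod_eq_of_lt ha]

lemma lsDigit_add_mul_succ {b a : ℕ} (ha : a < b) (n k : ℕ) :
    lsDigit b (a + b * n) (k + 1) = lsDigit b n k := by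
  have hb : 0 < b := by omega
  simp [lsDigit, pow_succ', ← Nat.div_div_eq_div_mul, Nat.add_mul_div_left a n hb,
    Nat.div_eq_of_lt ha]

lemma lsDigit_lt {b : ℕ} (hb : 0 < b) (n k : ℕ) : lsDigit b n k < b := Nat.mod_lt _ hb

lemma lsDigit_zero_right (b n : ℕ) : lsDigit b n 0 = n % b := by simp [lsDigit]

/-- Appending a lowest digit: the only new constraint is between that digit and the next one. -/
lemma memNLS_add_mul {L S a : ℕ} (ha : a < L + S) (n : ℕ) :
    memNLS L S (a + (L + S) * n) ↔ memNLS L S n ∧ (a < L ∨ (L + S) ∣ n) := by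
  have hb : 0 < L + S := by omega
  have key : ∀ k m, lsDigit (L + S) m k ≤ L + S - 1 := fun k m => by
    have := lsDigit_lt hb m k
    omega
  unfold memNLS
  simp only [key, true_and, and_true]
  constructor
  · intro h
    refine ⟨fun k => ?_, ?_⟩
    · simpa only [lsDigit_add_mul_succ ha] using h (k + 1)
    · have h0 := h 0
      rw [lsDigit_add_mul_zero ha, lsDigit_add_mul_succ ha, lsDigit_zero_right] at h0
      rw [Nat.dvd_iff_mod_eq_zero]
      omega
  · rintro ⟨h, h'⟩ k
    cases k with
    | zero =>
      rw [lsDigit_add_mul_zero ha, lsDigit_add_mul_succ ha, lsDigit_zero_right]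
      rw [Nat.dvd_iff_mod_eq_zero] at h'
      omega
    | succ k => simpa only [lsDigit_add_mul_succ ha] using h k

lemma memNLS_zero (L S : ℕ) : memNLS L S 0 := by
  intro k
  simp [lsDigit]

lemma memNLS_mul {L S : ℕ} (hL : 0 < L) (n : ℕ) :
    memNLS L S ((L + S) * n) ↔ memNLS L S n := by
  have h := memNLS_add_mul (L := L) (S := S) (a := 0) (by omega) n
  simpa [hL] using h

/-- The factor by which the remaining digits are shifted after a lowest digit `a`. -/
def lsShift (L S a : ℕ) : ℕ := if a < L then L + S else (L + S) * (L + S)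

/-- The factor by which the remaining digits are contracted after a lowest digit `a`. -/
def lsLen (L : ℕ) (γ : ℝ) (a : ℕ) : ℝ := if a < L then γ else γ ^ 2

/-- The left endpoint of the interval of points whose lowest digit is `a`. -/
def lsLeft (L : ℕ) (γ : ℝ) (a : ℕ) : ℝ := lsTilde L γ a * γ

lemma lsLeft_succ (L : ℕ) (γ : ℝ) (a : ℕ) :
    lsLeft L γ (a + 1) = lsLeft L γ a + lsLen L γ a := by
  unfold lsLeft lsLen lsTilde
  rcases lt_trichotomy (a + 1) L with h | h | h
  · rw [if_pos h, if_pos (by omega), if_pos (by omega)]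
    push_cast
    ring
  · rw [if_neg (by omega), if_pos (by omega), if_pos (by omega)]
    subst h
    push_cast
    ring
  · rw [if_neg (by omega), if_neg (by omega), if_neg (by omega)]
    push_cast
    ring

lemma lsLeft_zero {L : ℕ} (hL : 0 < L) (γ : ℝ) : lsLeft L γ 0 = 0 := by
  simp [lsLeft, lsTilde, hL]

lemma lsLeft_base (L S : ℕ) (γ : ℝ) :
    lsLeft L γ (L + S) = L * γ + S * γ ^ 2 := by
  simp only [lsLeft, lsTilde, if_neg (by omega : ¬ L + S < L)]
  push_cast
  ring

lemma lsLen_pos (L : ℕ) {γ : ℝ} (hγ : 0 < γ) (a : ℕ) : 0 < lsLen L γ a := by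
  unfold lsLen
  split_ifs <;> positivity

lemma lsLeft_monotone (L : ℕ) {γ : ℝ} (hγ : 0 < γ) : Monotone (lsLeft L γ) :=
  monotone_nat_of_le_succ fun a => by
    have := lsLen_pos L hγ a
    rw [lsLeft_succ]
    linarith

lemma memNLS_base_pow {L S : ℕ} (hL : 0 < L) (hS : 0 < S) (k : ℕ) :
    memNLS L S ((L + S) ^ k) := by
  induction k with
  | zero => simpa [memNLS_zero L S] using memNLS_add_mul (L := L) (S := S) (a := 1) (by omega) 0
  | succ k ih => rwa [pow_succ', memNLS_mul hL]

lemma memNLS_infinite {L S : ℕ} (hL : 0 < L) (hS : 0 < S) : (Set.ofPred (memNLS L S)).Infinite :=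
  Set.infinite_of_injective_forall_mem (Nat.pow_right_injective (by omega : 2 ≤ L + S))
    (memNLS_base_pow hL hS)

lemma lsPhi_eq_sum_range {L S : ℕ} (hL : 0 < L) (hS : 0 < S) (γ : ℝ) {n K : ℕ}
    (hK : n < (L + S) ^ K) :
    lsPhi L S γ n =
      ∑ k ∈ range K, lsTilde L γ (lsDigit (L + S) n k) * γ ^ (k + 1) := by
  have hzero : ∀ k, n < (L + S) ^ k →
      lsTilde L γ (lsDigit (L + S) n k) * γ ^ (k + 1) = 0 := fun k hk => by
    simp [lsDigit, Nat.div_eq_of_lt hk, lsTilde, hL]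
  have hlog : n < (L + S) ^ (Nat.log (L + S) n + 1) :=
    Nat.lt_pow_succ_log_self (by omega) n
  unfold lsPhi
  rcases le_total (Nat.log (L + S) n + 1) K with h | h
  · refine Finset.sum_subset (by simpa using h) fun k _ hk => hzero k ?_
    exact hlog.trans_le (Nat.pow_le_pow_right (by omega) (by simpa using hk))
  · refine (Finset.sum_subset (by simpa using h) fun k _ hk => hzero k ?_).symm
    exact hK.trans_le (Nat.pow_le_pow_right (by omega) (by simpa using hk))

lemma lsPhi_add_mul {L S a : ℕ} (hL : 0 < L) (hS : 0 < S) (γ : ℝ) (ha : a < L + S) (n : ℕ) :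
    lsPhi L S γ (a + (L + S) * n) = lsLeft L γ a + γ * lsPhi L S γ n := by
  have h1 : n < (L + S) ^ n := Nat.lt_pow_self (by omega)
  have h2 : a + (L + S) * n < (L + S) ^ (n + 1) := by
    rw [pow_succ']
    nlinarith
  rw [lsPhi_eq_sum_range hL hS γ h1, lsPhi_eq_sum_range hL hS γ h2, Finset.sum_range_succ',
    lsDigit_add_mul_zero ha, Finset.mul_sum, add_comm]
  congr 1
  · simp [lsLeft]
  · refine Finset.sum_congr rfl fun k _ => ?_
    rw [lsDigit_add_mul_succ ha]
    ring

lemma lsPhi_shift {L S a : ℕ} (hL : 0 < L) (hS : 0 < S) (γ : ℝ) (ha : a < L + S) (n : ℕ) :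
    lsPhi L S γ (a + lsShift L S a * n) = lsLeft L γ a + lsLen L γ a * lsPhi L S γ n := by
  unfold lsShift lsLen
  split_ifs with h
  · exact lsPhi_add_mul hL hS γ ha n
  · have h0 := lsPhi_add_mul (a := 0) hL hS γ (by omega) n
    rw [zero_add, lsLeft_zero hL, zero_add] at h0
    rw [mul_assoc, lsPhi_add_mul hL hS γ ha, h0]
    ring

lemma lsPhi_nonneg (L S : ℕ) {γ : ℝ} (hγ : 0 < γ) (n : ℕ) : 0 ≤ lsPhi L S γ n := by
  refine Finset.sum_nonneg fun k _ => mul_nonneg ?_ (by positivity)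
  unfold lsTilde
  split_ifs with h
  · positivity
  · have : (L : ℝ) ≤ lsDigit (L + S) n k := by exact_mod_cast not_lt.1 h
    have := mul_nonneg hγ.le (sub_nonneg.2 this)
    positivity

/-- Every element of `N_{L,S}` arises from a smaller one by prepending a lowest digit. -/
lemma memNLS.exists_shift {L S n : ℕ} (hL : 0 < L) (hn : memNLS L S n) :
    ∃ a < L + S, ∃ m, n = a + lsShift L S a * m ∧ memNLS L S m := by
  have ha : n % (L + S) < L + S := Nat.mod_lt _ (by omega)
  have hd := Nat.mod_add_div n (L + S)
  rw [← hd, memNLS_add_mul ha] at hn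
  by_cases h : n % (L + S) < L
  · exact ⟨_, ha, n / (L + S), by simp [lsShift, h, hd], hn.1⟩
  · obtain ⟨m, hm⟩ := hn.2.resolve_left h
    refine ⟨_, ha, m, ?_, ?_⟩
    · rw [lsShift, if_neg h, mul_assoc, ← hm, hd]
    · rw [hm, memNLS_mul hL] at hn
      exact hn.1

lemma lsPhi_lt_one {L S : ℕ} (hL : 0 < L) (hS : 0 < S) {γ : ℝ} (hγ : 0 < γ)
    (hroot : (L : ℝ) * γ + (S : ℝ) * γ ^ 2 = 1) {n : ℕ} (hn : memNLS L S n) :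
    lsPhi L S γ n < 1 := by
  induction n using Nat.strong_induction_on with
  | _ n ih =>
    rcases Nat.eq_zero_or_pos n with rfl | hpos
    · simp [lsPhi, lsDigit, lsTilde, hL]
    obtain ⟨a, ha, m, rfl, hm⟩ := hn.exists_shift hL
    have hshift : 2 ≤ lsShift L S a := by
      unfold lsShift
      split_ifs <;> nlinarith
    have hlt := ih m (by nlinarith [Nat.zero_le m]) hm
    have h1 := lsLeft_monotone L hγ (show a + 1 ≤ L + S from ha)
    rw [lsLeft_base, hroot, lsLeft_succ] at h1
    rw [lsPhi_shift hL hS γ ha]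
    nlinarith [lsLen_pos L hγ a]

/-- The number of `m` with `a + b * m < X`, for `a < b`. -/
def upDiv (b X a : ℕ) : ℕ := (X + (b - 1 - a)) / b

lemma lt_upDiv_iff {b a : ℕ} (ha : a < b) (X m : ℕ) : m < upDiv b X a ↔ a + b * m < X := by
  rw [upDiv, Nat.lt_iff_add_one_le, Nat.le_div_iff_mul_le (by omega)]
  have : (m + 1) * b = b * m + b := by ring
  omega

lemma sum_range_eq_sum_residues {b : ℕ} (hb : 0 < b) (f : ℕ → ℝ) (X : ℕ) :
    ∑ n ∈ range X, f n = ∑ a ∈ range b, ∑ m ∈ range (upDiv b X a), f (a + b * m) := by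
  rw [← Finset.sum_fiberwise_of_maps_to (g := fun n => n % b) (t := range b)
    (fun n _ => by simpa using Nat.mod_lt n hb)]
  refine Finset.sum_congr rfl fun a ha => ?_
  have ha' : a < b := by simpa using ha
  refine Finset.sum_nbij' (fun n => n / b) (fun m => a + b * m) ?_ ?_ ?_ ?_ ?_
  · intro n hn
    simp only [mem_filter, mem_range] at hn ⊢
    rw [lt_upDiv_iff ha', ← hn.2, Nat.mod_add_div]
    exact hn.1
  · intro m hm
    simp only [mem_filter, mem_range] at hm ⊢
    rw [lt_upDiv_iff ha'] at hm
    exact ⟨hm, by simp [Nat.mod_eq_of_lt ha']⟩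
  · intro n hn
    simp only [mem_filter, mem_range] at hn
    rw [← hn.2, Nat.mod_add_div]
  · intro m _
    simp [Nat.add_mul_div_left a m hb, Nat.div_eq_of_lt ha']
  · intro n hn
    simp only [mem_filter, mem_range] at hn
    rw [← hn.2, Nat.mod_add_div]

/-- The number of `m` with `a + lsShift L S a * m < X`, for `a < L + S`. -/
def lsChild (L S X a : ℕ) : ℕ :=
  if a < L then upDiv (L + S) X a else upDiv (L + S) (upDiv (L + S) X a) 0

open Classical in
/-- The sum of `f` over the elements of `N_{L,S}` below `X`. -/
def lsSum (L S : ℕ) (f : ℕ → ℝ) (X : ℕ) : ℝ :=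
  ∑ n ∈ range X, if memNLS L S n then f n else 0

lemma lsSum_eq_sum_child {L S : ℕ} (hL : 0 < L) (f : ℕ → ℝ) (X : ℕ) :
    lsSum L S f X =
      ∑ a ∈ range (L + S), lsSum L S (fun m => f (a + lsShift L S a * m)) (lsChild L S X a) := by
  classical
  have hb : 0 < L + S := by omega
  unfold lsSum
  rw [sum_range_eq_sum_residues hb]
  refine Finset.sum_congr rfl fun a ha => ?_
  have ha' : a < L + S := by simpa using ha
  by_cases h : a < L
  · simp only [lsChild, lsShift, if_pos h]
    refine Finset.sum_congr rfl fun m _ => ?_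
    simp [memNLS_add_mul ha', h]
  · rw [lsChild, if_neg h, sum_range_eq_sum_residues hb, Finset.sum_eq_single 0]
    · refine Finset.sum_congr rfl fun m _ => ?_
      simp [memNLS_add_mul ha', memNLS_mul hL, lsShift, h, mul_assoc]
    · intro c hc hc0
      refine Finset.sum_eq_zero fun m _ => ?_
      have hc' : c < L + S := by simpa using hc
      have hnd : ¬ (L + S) ∣ c + (L + S) * m := by
        rw [Nat.dvd_iff_mod_eq_zero]
        simpa [Nat.mod_eq_of_lt hc'] using hc0
      simp [memNLS_add_mul ha', h, hnd]
    · intro h0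
      exact absurd (mem_range.2 hb) h0

/-- The number of elements of `N_{L,S}` below `X`, as a real number. -/
def lsCount (L S X : ℕ) : ℝ := lsSum L S (fun _ => 1) X

lemma lsCount_eq_sum_child {L S : ℕ} (hL : 0 < L) (X : ℕ) :
    lsCount L S X = ∑ a ∈ range (L + S), lsCount L S (lsChild L S X a) :=
  lsSum_eq_sum_child hL _ X

lemma lsCount_succ_bounds (L S X : ℕ) :
    lsCount L S X ≤ lsCount L S (X + 1) ∧ lsCount L S (X + 1) ≤ lsCount L S X + 1 := by
  classical
  unfold lsCount lsSum
  rw [Finset.sum_range_succ]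
  split_ifs <;> constructor <;> linarith

lemma lsCount_zero (L S : ℕ) : lsCount L S 0 = 0 := by simp [lsCount, lsSum]

lemma lsCount_monotone (L S : ℕ) : Monotone (lsCount L S) :=
  monotone_nat_of_le_succ fun X => (lsCount_succ_bounds L S X).1

lemma upDiv_bounds {b a : ℕ} (ha : a < b) (X : ℕ) :
    X / b ≤ upDiv b X a ∧ upDiv b X a ≤ X / b + 1 := by
  unfold upDiv
  refine ⟨Nat.div_le_div_right (by omega), ?_⟩
  rw [← Nat.add_div_right X (by omega)]
  exact Nat.div_le_div_right (by omega)

lemma upDiv_le {b a M X : ℕ} (ha : a < b) (hX : X ≤ b * M) : upDiv b X a ≤ M := by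
  by_contra h
  rw [not_le, lt_upDiv_iff ha] at h
  omega

lemma lsChild_bounds {L S a : ℕ} (ha : a < L + S) (X : ℕ) :
    X / lsShift L S a ≤ lsChild L S X a ∧ lsChild L S X a ≤ X / lsShift L S a + 1 := by
  unfold lsShift lsChild
  split_ifs with h
  · exact upDiv_bounds ha X
  · have h1 := upDiv_bounds ha X
    have hb : 0 < L + S := by omega
    rw [← Nat.div_div_eq_div_mul]
    refine ⟨(Nat.div_le_div_right h1.1).trans (upDiv_bounds hb _).1, upDiv_le hb ?_⟩
    have := Nat.lt_mul_div_succ (X / (L + S)) hb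
    omega

lemma lsChild_le_pow {L S a M X : ℕ} (ha : a < L + S) (hX : X ≤ (L + S) ^ (M + 1)) :
    lsChild L S X a ≤ (L + S) ^ M := by
  have hb : 0 < L + S := by omega
  have h1 : upDiv (L + S) X a ≤ (L + S) ^ M := upDiv_le ha (by rwa [← pow_succ'])
  unfold lsChild
  split_ifs
  · exact h1
  · exact upDiv_le hb (h1.trans (Nat.le_mul_of_pos_left _ hb))

lemma abs_lsCount_child_sub_le {L S a : ℕ} (ha : a < L + S) (X : ℕ) :
    |lsCount L S (lsChild L S X a) - lsCount L S (X / lsShift L S a)| ≤ 1 := by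
  obtain ⟨h1, h2⟩ := lsChild_bounds ha X
  have h3 := lsCount_monotone L S h1
  have h4 := lsCount_monotone L S h2
  have h5 := (lsCount_succ_bounds L S (X / lsShift L S a)).2
  rw [abs_le]
  constructor <;> linarith

lemma sum_lsCount_shift (L S X : ℕ) :
    ∑ a ∈ range (L + S), lsCount L S (X / lsShift L S a) =
      L * lsCount L S (X / (L + S)) + S * lsCount L S (X / (L + S) / (L + S)) := by
  rw [Finset.sum_range_add]
  congr 1
  · rw [Finset.sum_congr rfl fun a ha => by rw [lsShift, if_pos (mem_range.1 ha)]]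
    simp
  · simp [lsShift, Nat.div_div_eq_div_mul]

/-- When `S = L + 1`, dropping the lowest digit divides the count by `S`, up to a bounded error
per digit. -/
lemma abs_lsCount_sub_mul_le {L S : ℕ} (hL : 0 < L) (hSL : S = L + 1) {M X : ℕ}
    (hX : X ≤ (L + S) ^ M) :
    |lsCount L S X - S * lsCount L S (X / (L + S))| ≤ ((L + S : ℕ) : ℝ) * (M + 1) := by
  have hb : 3 ≤ L + S := by omega
  have hbR : (3 : ℝ) ≤ ((L + S : ℕ) : ℝ) := by exact_mod_cast hb
  induction M generalizing X with
  | zero =>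
    have hX1 : X ≤ 1 := by simpa using hX
    have h0 : X / (L + S) = 0 := Nat.div_eq_of_lt (by omega)
    have h1 := lsCount_monotone L S hX1
    have h2 := lsCount_monotone L S (Nat.zero_le X)
    have h3 := (lsCount_succ_bounds L S 0).2
    rw [zero_add] at h3
    rw [lsCount_zero] at h2 h3
    rw [h0, lsCount_zero, abs_le]
    constructor <;> norm_num <;> push_cast at hbR <;> linarith
  | succ M ih =>
    have hY : X / (L + S) ≤ (L + S) ^ M :=
      Nat.div_le_of_le_mul (by rwa [← pow_succ'])
    have h1 := ih hY
    have h2 : |lsCount L S X - (L * lsCount L S (X / (L + S)) +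
        S * lsCount L S (X / (L + S) / (L + S)))| ≤ ((L + S : ℕ) : ℝ) := by
      rw [← sum_lsCount_shift, lsCount_eq_sum_child hL, ← Finset.sum_sub_distrib]
      refine (Finset.abs_sum_le_sum_abs _ _).trans ?_
      refine (Finset.sum_le_sum fun a ha =>
        abs_lsCount_child_sub_le (mem_range.1 ha) X).trans ?_
      simp
    have hSR : (S : ℝ) = L + 1 := by exact_mod_cast hSL
    rw [abs_le] at h1 h2 ⊢
    rw [hSR] at h1 h2 ⊢
    push_cast at h1 h2 ⊢
    constructor <;> linarith [h1.1, h1.2, h2.1, h2.2]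

lemma mul_gamma_eq_one {L S : ℕ} (hSL : S = L + 1) {γ : ℝ} (hγ : 0 < γ)
    (hroot : (L : ℝ) * γ + (S : ℝ) * γ ^ 2 = 1) : γ * S = 1 := by
  have hSR : (L : ℝ) = S - 1 := by rw [hSL]; push_cast; ring
  rw [hSR] at hroot
  have h : (γ * S - 1) * (γ + 1) = 0 := by linarith
  rcases mul_eq_zero.1 h with h | h <;> linarith

/-- The count of points with lowest digit `a` is the expected one, up to a bounded error
per digit. -/
lemma abs_lsCount_child_sub_len_mul_le {L S : ℕ} (hL : 0 < L) (hSL : S = L + 1) {γ : ℝ}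
    (hγ : 0 < γ) (hγ1 : γ < 1) (hroot : (L : ℝ) * γ + (S : ℝ) * γ ^ 2 = 1) {M X a : ℕ}
    (ha : a < L + S) (hX : X ≤ (L + S) ^ M) :
    |lsCount L S (lsChild L S X a) - lsLen L γ a * lsCount L S X| ≤
      3 * ((L + S : ℕ) : ℝ) * (M + 1) := by
  have hγS := mul_gamma_eq_one hSL hγ hroot
  have h1 := abs_lsCount_child_sub_le ha X
  have hX' := abs_lsCount_sub_mul_le hL hSL hX
  have hY' := abs_lsCount_sub_mul_le hL hSL ((Nat.div_le_self X (L + S)).trans hX)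
  have hbR : (1 : ℝ) ≤ ((L + S : ℕ) : ℝ) * (M + 1) := by
    have : 1 ≤ (L + S) * (M + 1) := Nat.mul_pos (by omega) (by omega)
    exact_mod_cast this
  set D : ℝ := ((L + S : ℕ) : ℝ) * (M + 1) with hD
  have hscale : ∀ u v : ℝ, |u - S * v| ≤ D → |v - γ * u| ≤ D := fun u v h => by
    have : v - γ * u = -(γ * (u - S * v)) := by linear_combination (-v) * hγS
    rw [this, abs_neg, abs_mul, abs_of_pos hγ]
    nlinarith [abs_nonneg (u - S * v)]
  have hX2 := hscale _ _ hX'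
  have hY2 := hscale _ _ hY'
  unfold lsLen
  unfold lsShift at h1
  rw [show 3 * ((L + S : ℕ) : ℝ) * (M + 1) = 3 * D by rw [hD]; ring]
  split_ifs at h1 ⊢ with h
  · rw [abs_le] at *
    constructor <;> linarith [h1.1, h1.2, hX2.1, hX2.2]
  · rw [← Nat.div_div_eq_div_mul] at h1
    have h3 : |γ * lsCount L S (X / (L + S)) - γ ^ 2 * lsCount L S X| ≤ D := by
      have : γ * lsCount L S (X / (L + S)) - γ ^ 2 * lsCount L S X =
          γ * (lsCount L S (X / (L + S)) - γ * lsCount L S X) := by ring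
      rw [this, abs_mul, abs_of_pos hγ]
      nlinarith [abs_nonneg (lsCount L S (X / (L + S)) - γ * lsCount L S X)]
    rw [abs_le] at *
    constructor <;> linarith [h1.1, h1.2, hY2.1, hY2.2, h3.1, h3.2]

/-- The number of `n ∈ N_{L,S}` with `n < X` and `φ(n) < x`. -/
def lsBelow (L S : ℕ) (γ : ℝ) (X : ℕ) (x : ℝ) : ℝ :=
  lsSum L S (fun n => if lsPhi L S γ n < x then 1 else 0) X

lemma lsBelow_eq_sum_child {L S : ℕ} (hL : 0 < L) (hS : 0 < S) {γ : ℝ} (hγ : 0 < γ)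
    (X : ℕ) (x : ℝ) :
    lsBelow L S γ X x = ∑ a ∈ range (L + S),
      lsBelow L S γ (lsChild L S X a) ((x - lsLeft L γ a) / lsLen L γ a) := by
  unfold lsBelow
  rw [lsSum_eq_sum_child hL]
  refine Finset.sum_congr rfl fun a ha => ?_
  congr 1
  funext m
  refine if_congr ?_ rfl rfl
  rw [lsPhi_shift hL hS γ (mem_range.1 ha), lt_div_iff₀ (lsLen_pos L hγ a),
    lt_sub_iff_add_lt', mul_comm (lsLen L γ a)]

lemma lsBelow_of_nonpos {L S : ℕ} {γ : ℝ} (hγ : 0 < γ) (X : ℕ) {x : ℝ} (hx : x ≤ 0) :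
    lsBelow L S γ X x = 0 := by
  unfold lsBelow lsSum
  refine Finset.sum_eq_zero fun n _ => ?_
  simp [not_lt.2 (hx.trans (lsPhi_nonneg L S hγ n))]

lemma lsBelow_of_one_le {L S : ℕ} (hL : 0 < L) (hS : 0 < S) {γ : ℝ} (hγ : 0 < γ)
    (hroot : (L : ℝ) * γ + (S : ℝ) * γ ^ 2 = 1) (X : ℕ) {x : ℝ} (hx : 1 ≤ x) :
    lsBelow L S γ X x = lsCount L S X := by
  unfold lsBelow lsCount lsSum
  refine Finset.sum_congr rfl fun n _ => ?_
  split_ifs with h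
  · simp [(lsPhi_lt_one hL hS hγ hroot h).trans_le hx]
  · rfl

lemma lsBelow_bounds (L S : ℕ) (γ : ℝ) (X : ℕ) (x : ℝ) :
    0 ≤ lsBelow L S γ X x ∧ lsBelow L S γ X x ≤ lsCount L S X := by
  unfold lsBelow lsCount lsSum
  constructor
  · refine Finset.sum_nonneg fun n _ => ?_
    dsimp only
    split_ifs <;> norm_num
  · refine Finset.sum_le_sum fun n _ => ?_
    dsimp only
    split_ifs <;> norm_num

/-- Truncation of a real number to the unit interval. -/
def clampUnit (x : ℝ) : ℝ := max 0 (min x 1)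

lemma clampUnit_mem (x : ℝ) : 0 ≤ clampUnit x ∧ clampUnit x ≤ 1 :=
  ⟨le_max_left _ _, max_le zero_le_one (min_le_right _ _)⟩

lemma clampUnit_of_nonpos {x : ℝ} (hx : x ≤ 0) : clampUnit x = 0 :=
  max_eq_left ((min_le_left _ _).trans hx)

lemma clampUnit_of_one_le {x : ℝ} (hx : 1 ≤ x) : clampUnit x = 1 := by
  simp [clampUnit, min_eq_right hx]

lemma clampUnit_of_mem {x : ℝ} (h0 : 0 ≤ x) (h1 : x ≤ 1) : clampUnit x = x := by
  simp [clampUnit, min_eq_left h1, h0]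

lemma mul_clampUnit_div {l : ℝ} (hl : 0 < l) (p x : ℝ) :
    l * clampUnit ((x - p) / l) = min x (p + l) - min x p := by
  rcases le_total x p with h | h
  · rw [clampUnit_of_nonpos (div_nonpos_of_nonpos_of_nonneg (by linarith) hl.le),
      min_eq_left h, min_eq_left (by linarith)]
    ring
  rcases le_total x (p + l) with h' | h'
  · rw [clampUnit_of_mem (div_nonneg (by linarith) hl.le) ((div_le_one hl).2 (by linarith)),
      min_eq_left h', min_eq_right h]
    field_simp
  · rw [clampUnit_of_one_le ((one_le_div hl).2 (by linarith)), min_eq_right h', min_eq_right h]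
    ring

lemma sum_lsLen_mul_clampUnit {L S : ℕ} (hL : 0 < L) {γ : ℝ} (hγ : 0 < γ)
    (hroot : (L : ℝ) * γ + (S : ℝ) * γ ^ 2 = 1) {x : ℝ} (h0 : 0 ≤ x) (h1 : x ≤ 1) :
    ∑ a ∈ range (L + S), lsLen L γ a * clampUnit ((x - lsLeft L γ a) / lsLen L γ a) = x := by
  simp only [mul_clampUnit_div (lsLen_pos L hγ _), ← lsLeft_succ]
  rw [Finset.sum_range_sub (fun a => min x (lsLeft L γ a)), lsLeft_base, hroot, lsLeft_zero hL,
    min_eq_left h1, min_eq_right h0, sub_zero]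

lemma sum_abs_le_of_unique {ι : Type*} (s : Finset ι) (e : ι → ℝ) {B : ℝ} (hB : 0 ≤ B)
    (hle : ∀ i ∈ s, |e i| ≤ B) (huniq : ∀ i ∈ s, ∀ j ∈ s, e i ≠ 0 → e j ≠ 0 → i = j) :
    |∑ i ∈ s, e i| ≤ B := by
  by_cases h : ∃ i ∈ s, e i ≠ 0
  · obtain ⟨i, hi, hne⟩ := h
    rw [Finset.sum_eq_single_of_mem i hi fun j hj hji => ?_]
    · exact hle i hi
    · by_contra hj0
      exact hji (huniq j hj i hi hj0 hne)
  · push Not at h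
    rwa [Finset.sum_eq_zero h, abs_zero]

/-- The local discrepancy of the elements of `N_{L,S}` below `X ≤ (L+S)^M` is `O((M+1)²)`. -/
lemma abs_lsBelow_sub_le {L S : ℕ} (hL : 0 < L) (hSL : S = L + 1) {γ : ℝ}
    (hγ : 0 < γ) (hγ1 : γ < 1) (hroot : (L : ℝ) * γ + (S : ℝ) * γ ^ 2 = 1) {M X : ℕ}
    (hX : X ≤ (L + S) ^ M) (x : ℝ) :
    |lsBelow L S γ X x - clampUnit x * lsCount L S X| ≤
      3 * ((L + S : ℕ) : ℝ) ^ 2 * ((M : ℝ) + 1) ^ 2 := by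
  have hS : 0 < S := by omega
  have hbR : (1 : ℝ) ≤ ((L + S : ℕ) : ℝ) := by
    exact_mod_cast (by omega : 1 ≤ L + S)
  have hexact : ∀ (Y : ℕ) (y : ℝ), lsBelow L S γ Y y - clampUnit y * lsCount L S Y ≠ 0 →
      0 < y ∧ y < 1 := fun Y y hne => by
    by_contra h
    rw [not_and_or, not_lt, not_lt] at h
    rcases h with h | h
    · simp [lsBelow_of_nonpos hγ Y h, clampUnit_of_nonpos h] at hne
    · simp [lsBelow_of_one_le hL hS hγ hroot Y h, clampUnit_of_one_le h] at hne
  induction M generalizing X x with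
  | zero =>
    have hX1 : X ≤ 1 := by simpa using hX
    have h1 := lsCount_monotone L S hX1
    have h2 := (lsCount_succ_bounds L S 0).2
    rw [zero_add, lsCount_zero] at h2
    have h3 := lsBelow_bounds L S γ X x
    have h4 := clampUnit_mem x
    have h5 : clampUnit x * lsCount L S X ≤ lsCount L S X :=
      mul_le_of_le_one_left (h3.1.trans h3.2) h4.2
    have h6 := mul_nonneg h4.1 (h3.1.trans h3.2)
    have h7 : (1 : ℝ) ≤ 3 * ((L + S : ℕ) : ℝ) ^ 2 * (((0 : ℕ) : ℝ) + 1) ^ 2 := by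
      norm_num only [Nat.cast_zero]
      nlinarith
    rw [abs_le]
    constructor <;> linarith [h3.1, h3.2]
  | succ M ih =>
    by_cases hne : lsBelow L S γ X x - clampUnit x * lsCount L S X = 0
    · rw [hne, abs_zero]
      positivity
    obtain ⟨hx0, hx1⟩ := hexact X x hne
    set y : ℕ → ℝ := fun a => (x - lsLeft L γ a) / lsLen L γ a with hy
    have hsplit : lsBelow L S γ X x - clampUnit x * lsCount L S X =
        ∑ a ∈ range (L + S), (lsBelow L S γ (lsChild L S X a) (y a) -
            clampUnit (y a) * lsCount L S (lsChild L S X a)) +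
          ∑ a ∈ range (L + S), clampUnit (y a) *
            (lsCount L S (lsChild L S X a) - lsLen L γ a * lsCount L S X) := by
      have hlen : clampUnit x * lsCount L S X =
          ∑ a ∈ range (L + S), lsLen L γ a * clampUnit (y a) * lsCount L S X := by
        rw [← Finset.sum_mul, sum_lsLen_mul_clampUnit hL hγ hroot hx0.le hx1.le,
          clampUnit_of_mem hx0.le hx1.le]
      rw [lsBelow_eq_sum_child hL hS hγ, hlen, ← Finset.sum_add_distrib,
        ← Finset.sum_sub_distrib]
      refine Finset.sum_congr rfl fun a _ => ?_
      ring
    have hmain : |∑ a ∈ range (L + S), (lsBelow L S γ (lsChild L S X a) (y a) -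
        clampUnit (y a) * lsCount L S (lsChild L S X a))| ≤
        3 * ((L + S : ℕ) : ℝ) ^ 2 * ((M : ℝ) + 1) ^ 2 := by
      refine sum_abs_le_of_unique _ _ (by positivity)
        (fun a ha => ih (lsChild_le_pow (mem_range.1 ha) hX) (y a)) ?_
      have hmem : ∀ a, 0 < y a ∧ y a < 1 → lsLeft L γ a < x ∧ x < lsLeft L γ (a + 1) := by
        rintro a ⟨h0, h1⟩
        have hl := lsLen_pos L hγ a
        rw [hy] at h0 h1
        rw [div_pos_iff_of_pos_right hl] at h0
        rw [div_lt_one hl] at h1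
        rw [lsLeft_succ]
        constructor <;> linarith
      intro i _ j _ hi hj
      have hi' := hmem i (hexact _ _ hi)
      have hj' := hmem j (hexact _ _ hj)
      by_contra hij
      rcases Nat.lt_or_gt_of_ne hij with h | h
      · linarith [lsLeft_monotone L hγ (Nat.succ_le_of_lt h), hi'.2, hj'.1]
      · linarith [lsLeft_monotone L hγ (Nat.succ_le_of_lt h), hj'.2, hi'.1]
    have hrest : |∑ a ∈ range (L + S), clampUnit (y a) *
        (lsCount L S (lsChild L S X a) - lsLen L γ a * lsCount L S X)| ≤
        3 * ((L + S : ℕ) : ℝ) ^ 2 * ((M : ℝ) + 2) := by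
      refine (Finset.abs_sum_le_sum_abs _ _).trans ?_
      refine (Finset.sum_le_sum (g := fun _ => 3 * ((L + S : ℕ) : ℝ) * ((M : ℝ) + 2))
        fun a ha => ?_).trans_eq ?_
      · have h := abs_lsCount_child_sub_len_mul_le hL hSL hγ hγ1 hroot (mem_range.1 ha) hX
        rw [abs_mul, abs_of_nonneg (clampUnit_mem _).1]
        refine (mul_le_of_le_one_left (abs_nonneg _) (clampUnit_mem _).2).trans (h.trans_eq ?_)
        push_cast
        ring
      · rw [Finset.sum_const, Finset.card_range, nsmul_eq_mul]
        ring
    rw [hsplit]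
    refine (abs_add_le _ _).trans ((add_le_add hmain hrest).trans ?_)
    rw [← mul_add]
    refine mul_le_mul_of_nonneg_left ?_ (by positivity)
    push_cast
    nlinarith [(Nat.cast_nonneg M : (0 : ℝ) ≤ M)]

lemma lsCount_one (L S : ℕ) : lsCount L S 1 = 1 := by
  simp only [lsCount, lsSum, Finset.sum_range_one, if_pos (memNLS_zero L S)]

lemma two_pow_le_two_mul_lsCount {L S : ℕ} (hL : 0 < L) (hSL : S = L + 1) (k : ℕ) :
    (2 : ℝ) ^ k ≤ 2 * lsCount L S ((L + S) ^ k) := by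
  have hb : 0 < L + S := by omega
  have hone : ∀ j, 1 ≤ lsCount L S ((L + S) ^ j) := fun j => by
    rw [← lsCount_one L S]
    exact lsCount_monotone L S (Nat.one_le_pow _ _ hb)
  induction k using Nat.twoStepInduction with
  | zero => linarith [hone 0, pow_zero (2 : ℝ)]
  | one => linarith [hone 1, pow_one (2 : ℝ)]
  | more k ih0 ih1 =>
    have h : ∑ a ∈ range (L + S), lsCount L S ((L + S) ^ (k + 2) / lsShift L S a) ≤
        lsCount L S ((L + S) ^ (k + 2)) := by
      rw [lsCount_eq_sum_child hL ((L + S) ^ (k + 2))]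
      exact Finset.sum_le_sum fun a ha =>
        lsCount_monotone L S (lsChild_bounds (mem_range.1 ha) _).1
    have hdiv : ∀ j, (L + S) ^ (j + 1) / (L + S) = (L + S) ^ j := fun j => by
      rw [pow_succ, Nat.mul_div_cancel _ hb]
    rw [sum_lsCount_shift, hdiv (k + 1), hdiv k] at h
    have hLR : (1 : ℝ) ≤ L := by exact_mod_cast hL
    have hSR : (S : ℝ) = L + 1 := by exact_mod_cast hSL
    rw [hSR] at h
    have h1 := hone (k + 1)
    have h0 := hone k
    rw [pow_succ] at ih1
    rw [pow_succ, pow_succ]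
    nlinarith

lemma lsCount_eq_count (L S X : ℕ) [DecidablePred (memNLS L S)] :
    lsCount L S X = (Nat.count (memNLS L S) X : ℝ) := by
  rw [Nat.count_eq_card_filter_range, lsCount, lsSum, Finset.card_filter, Nat.cast_sum]
  refine Finset.sum_congr rfl fun n _ => ?_
  split_ifs <;> simp

lemma sum_Icc_lsSeq {L S : ℕ} (hL : 0 < L) (hS : 0 < S) (γ : ℝ) (f : ℝ → ℝ) (m : ℕ) :
    ∑ j ∈ Finset.Icc 1 m, f (lsSeq L S γ j) =
      lsSum L S (fun n => f (lsPhi L S γ n)) (Nat.nth (memNLS L S) m) := by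
  classical
  induction m with
  | zero =>
    have h := Nat.count_nth_zero (memNLS L S)
    rw [Nat.count_eq_card_filter_range, Finset.card_eq_zero] at h
    simp only [lsSum, ← Finset.sum_filter]
    rw [h]
    simp
  | succ m ih =>
    rw [Finset.sum_Icc_succ_top (by omega), ih]
    simp only [lsSum, ← Finset.sum_filter]
    rw [Nat.filter_range_nth_eq_insert_of_infinite (memNLS_infinite hL hS) m,
      Finset.sum_insert (by simp), add_comm]
    simp [lsSeq]

/-- The local discrepancy of the first `m` points of the sequence. -/
lemma abs_sum_lsSeq_sub_le {L S : ℕ} (hL : 0 < L) (hSL : S = L + 1) {γ : ℝ}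
    (hγ : 0 < γ) (hγ1 : γ < 1) (hroot : (L : ℝ) * γ + (S : ℝ) * γ ^ 2 = 1) {m N : ℕ}
    (hm : m ≤ N) {y : ℝ} (hy0 : 0 ≤ y) (hy1 : y ≤ 1) :
    |∑ j ∈ Finset.Icc 1 m, Set.indicator (Set.Ico (0 : ℝ) y) (fun _ => (1 : ℝ)) (lsSeq L S γ j)
      - m * y| ≤ 3 * ((L + S : ℕ) : ℝ) ^ 2 * ((Nat.log 2 N : ℝ) + 3) ^ 2 := by
  classical
  have hS : 0 < S := by omega
  have hinf := memNLS_infinite hL hS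
  have hcount : lsCount L S (Nat.nth (memNLS L S) m) = m := by
    rw [lsCount_eq_count, Nat.count_nth_of_infinite hinf]
  have hX : Nat.nth (memNLS L S) m ≤ (L + S) ^ (Nat.log 2 N + 2) := by
    refine (Nat.nth_lt_of_lt_count ?_).le
    have h1 := two_pow_le_two_mul_lsCount hL hSL (Nat.log 2 N + 2)
    rw [lsCount_eq_count] at h1
    have h2 : 2 ^ (Nat.log 2 N + 2) ≤
        2 * Nat.count (memNLS L S) ((L + S) ^ (Nat.log 2 N + 2)) := by exact_mod_cast h1
    have h3 : N < 2 ^ (Nat.log 2 N + 1) := Nat.lt_pow_succ_log_self (by norm_num) N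
    rw [pow_succ] at h2
    omega
  have h := abs_lsBelow_sub_le hL hSL hγ hγ1 hroot hX y
  have hsum : ∑ j ∈ Finset.Icc 1 m,
      Set.indicator (Set.Ico (0 : ℝ) y) (fun _ => (1 : ℝ)) (lsSeq L S γ j) =
      lsBelow L S γ (Nat.nth (memNLS L S) m) y := by
    rw [sum_Icc_lsSeq hL hS, lsBelow]
    congr 1
    funext n
    simp [Set.indicator_apply, lsPhi_nonneg L S hγ n]
  rw [hsum, mul_comm]
  rw [clampUnit_of_mem hy0 hy1, hcount] at h
  convert h using 3
  push_cast
  ring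

/-- With abscissae `(j-1)/N`, a box selects an initial segment of the sequence. -/
lemma sum_box_eq_sum_Icc_ceil {N : ℕ} (hN : 0 < N) (x : ℕ → ℝ) {a : ℝ} (ha : a ≤ 1)
    (f : ℝ → ℝ) :
    ∑ j ∈ Finset.Icc 1 N,
        Set.indicator (Set.Ico (0 : ℝ) a) (fun _ => (1 : ℝ)) (((j : ℝ) - 1) / N) * f (x j) =
      ∑ j ∈ Finset.Icc 1 ⌈a * N⌉₊, f (x j) := by
  have hNR : (0 : ℝ) < N := by exact_mod_cast hN
  have hm : ⌈a * N⌉₊ ≤ N := Nat.ceil_le.2 (by nlinarith)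
  have hmem : ∀ j : ℕ, 1 ≤ j → ((((j : ℝ) - 1) / N) ∈ Set.Ico (0 : ℝ) a ↔ j ≤ ⌈a * N⌉₊) := by
    intro j hj
    obtain ⟨i, rfl⟩ := Nat.exists_eq_add_of_le' hj
    have h0 : (0 : ℝ) ≤ (i : ℝ) / N := by positivity
    rw [Nat.succ_le_iff, Nat.lt_ceil, ← div_lt_iff₀ hNR]
    simp [h0]
  rw [← Finset.sum_subset (Finset.Icc_subset_Icc_right hm)]
  · refine Finset.sum_congr rfl fun j hj => ?_
    rw [Finset.mem_Icc] at hj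
    rw [Set.indicator_of_mem ((hmem j hj.1).2 hj.2), one_mul]
  · intro j hj hj'
    rw [Finset.mem_Icc] at hj hj'
    rw [Set.indicator_of_notMem (fun h => hj' ⟨hj.1, (hmem j hj.1).1 h⟩), zero_mul]

/-- If `S = L+1`, the `(L,S)`-point set à la van der Corput satisfies
`N · D₂(P_{L,S}(N)) ≤ C₂ (log N)²` for all `N ≥ 2`. -/
theorem ls_vdc_discrepancy_S_eq_L_add_one (L S : ℕ) (hL : 0 < L) (hS : 0 < S)
    (hSL : S = L + 1)
    (γ : ℝ) (hγ0 : 0 < γ) (hγ1 : γ < 1)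
    (hroot : (L : ℝ) * γ + (S : ℝ) * γ ^ 2 = 1) :
    ∃ C₂ : ℝ, 0 < C₂ ∧ ∀ N : ℕ, 2 ≤ N →
      (N : ℝ) * discrep2 (fun n => (((n : ℝ) - 1) / N, lsSeq L S γ n)) N
        ≤ C₂ * (Real.log N) ^ 2 := by
  have hlog2 : 0 < Real.log 2 := Real.log_pos one_lt_two
  set B : ℝ := 3 * ((L + S : ℕ) : ℝ) ^ 2 with hB
  have hB0 : 0 ≤ B := by positivity
  refine ⟨(16 * B + 1) / Real.log 2 ^ 2, by positivity, fun N hN => ?_⟩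
  have hNR : (0 : ℝ) < N := by exact_mod_cast (by omega : 0 < N)
  set l : ℝ := Real.logb 2 N with hl
  have hl1 : 1 ≤ l := by
    rw [hl, Real.le_logb_iff_rpow_le one_lt_two hNR, Real.rpow_one]
    exact_mod_cast hN
  have hbound : B * ((Nat.log 2 N : ℝ) + 3) ^ 2 + 1 ≤
      (16 * B + 1) / Real.log 2 ^ 2 * Real.log N ^ 2 := by
    have h1 : (Nat.log 2 N : ℝ) ≤ l := by exact_mod_cast Real.natLog_le_logb N 2
    have h2 : ((Nat.log 2 N : ℝ) + 3) ^ 2 ≤ (4 * l) ^ 2 :=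
      pow_le_pow_left₀ (by positivity) (by linarith) 2
    have h3 : (16 * B + 1) / Real.log 2 ^ 2 * Real.log N ^ 2 = (16 * B + 1) * l ^ 2 := by
      rw [hl, Real.logb]
      field_simp
    rw [h3]
    nlinarith [mul_le_mul_of_nonneg_left h2 hB0]
  refine le_trans ?_ hbound
  rw [mul_comm, ← le_div_iff₀ hNR]
  refine Real.iSup_le ?_ (by positivity)
  rintro ⟨⟨a, y⟩, ha0, ha1, hy0, hy1⟩
  simp only at ha0 ha1 hy0 hy1 ⊢
  rw [sum_box_eq_sum_Icc_ceil (by omega) (lsSeq L S γ) ha1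
    (Set.indicator (Set.Ico (0 : ℝ) y) fun _ => (1 : ℝ))]
  have hm : ⌈a * N⌉₊ ≤ N := Nat.ceil_le.2 (by nlinarith)
  have h := abs_sum_lsSeq_sub_le hL hSL hγ0 hγ1 hroot hm hy0.le hy1
  have hc1 := Nat.le_ceil (a * N)
  have hc2 := Nat.ceil_lt_add_one (mul_nonneg ha0.le hNR.le)
  set cnt := ∑ j ∈ Finset.Icc 1 ⌈a * N⌉₊,
    Set.indicator (Set.Ico (0 : ℝ) y) (fun _ => (1 : ℝ)) (lsSeq L S γ j)
  have heq : cnt / N - a * y = (cnt - a * N * y) / N := by field_simp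
  rw [heq, abs_div, abs_of_pos hNR]
  refine div_le_div_of_nonneg_right ?_ hNR.le
  rw [abs_le] at h ⊢
  have h1 : 0 ≤ (⌈a * N⌉₊ - a * N) * y := mul_nonneg (by linarith) hy0.le
  have h2 : (⌈a * N⌉₊ - a * N) * y ≤ 1 := by nlinarith
  constructor <;> nlinarith [h.1, h.2]
end
end

section
/- Let (x_j)_{j≥1} be any sequence of points of [0,1), let N ≥ 1 be an integer, and let a, b ∈ (0,1]. Set M = #{ j : 1 ≤ j ≤ N and (j−1)/N < a }. Then | (1/N) Σ_{j=1}^{N} χ_{[0,a)}((j−1)/N) · χ_{[0,b)}(x_j) − ab | ≤ (M/N) · D(x_1, …, x_M) + 1/N, where D(x_1,…,x_M) is the one-dimensional discrepancy of the first M terms. (This is the key inequality reducing the two-dimensional discrepancy of the van der Corput-type point set {((j−1)/N, x_j)} to the one-dimensional discrepancy of (x_j).) -/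
open Finset Real

noncomputable section

/-- Each interval's deviation from its length is bounded by the discrepancy. -/
theorem abs_sub_le_discrep (x : ℕ → ℝ) (N : ℕ) {a b : ℝ} (ha : 0 ≤ a) (hab : a < b)
    (hb : b ≤ 1) :
    |(∑ j ∈ Finset.Icc 1 N, Set.indicator (Set.Ico a b) (fun _ => (1 : ℝ)) (x j)) / N
      - (b - a)| ≤ discrep x N := by
  refine le_ciSup (f := fun p : {p : ℝ × ℝ // 0 ≤ p.1 ∧ p.1 < p.2 ∧ p.2 ≤ 1} =>
    |(∑ j ∈ Finset.Icc 1 N,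
        Set.indicator (Set.Ico p.1.1 p.1.2) (fun _ => (1 : ℝ)) (x j)) / N
      - (p.1.2 - p.1.1)|) ⟨1, ?_⟩ ⟨(a, b), ha, hab, hb⟩
  rintro _ ⟨⟨⟨c, d⟩, hc, hcd, hd⟩, rfl⟩
  dsimp only at hc hcd hd ⊢
  have h_nonneg : 0 ≤ ∑ j ∈ Finset.Icc 1 N,
      Set.indicator (Set.Ico c d) (fun _ => (1 : ℝ)) (x j) :=
    Finset.sum_nonneg fun j _ => Set.indicator_nonneg (fun _ _ => zero_le_one) _
  have h_le : ∑ j ∈ Finset.Icc 1 N,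
      Set.indicator (Set.Ico c d) (fun _ => (1 : ℝ)) (x j) ≤ N := by
    calc _ ≤ ∑ _j ∈ Finset.Icc 1 N, (1 : ℝ) :=
          Finset.sum_le_sum fun j _ => Set.indicator_le_self' (fun _ _ => zero_le_one) _
      _ = N := by simp
  have h_div_nonneg := div_nonneg h_nonneg (Nat.cast_nonneg (α := ℝ) N)
  have h_div_le := div_le_one_of_le₀ h_le (Nat.cast_nonneg (α := ℝ) N)
  rw [abs_le]
  constructor <;> linarith

/-- The indices `1 ≤ j ≤ N` with `(j - 1) / N < a` form an initial segment. -/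
theorem filter_sub_one_div_lt {N : ℕ} (hN : 1 ≤ N) {a : ℝ} (ha : a ≤ 1) :
    (Finset.Icc 1 N).filter (fun j : ℕ => ((j : ℝ) - 1) / (N : ℝ) < a) =
      Finset.Icc 1 ⌈a * N⌉₊ := by
  have hN_pos : (0 : ℝ) < N := by exact_mod_cast hN
  have h_ceil : ⌈a * N⌉₊ ≤ N := Nat.ceil_le.2 (mul_le_of_le_one_left hN_pos.le ha)
  ext j
  simp only [Finset.mem_filter, Finset.mem_Icc, div_lt_iff₀ hN_pos]
  obtain _ | k := j
  · simp
  · rw [Nat.cast_succ, add_sub_cancel_right, ← Nat.lt_ceil]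
    omega

/-- The key inequality reducing the two-dimensional discrepancy of the
van der Corput-type point set `{((j−1)/N, x_j)}` to the one-dimensional discrepancy of
`(x_j)`: for `a, b ∈ (0,1]` and `M = #{1 ≤ j ≤ N : (j−1)/N < a}`,
`|(1/N) Σ_{j=1}^N χ_{[0,a)}((j−1)/N) χ_{[0,b)}(x_j) − ab| ≤ (M/N) D(x_1,…,x_M) + 1/N`. -/
theorem vdc_key_inequality (x : ℕ → ℝ) (hx : ∀ j, x j ∈ Set.Ico (0 : ℝ) 1)
    (N : ℕ) (hN : 1 ≤ N) (a b : ℝ)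
    (ha : a ∈ Set.Ioc (0 : ℝ) 1) (hb : b ∈ Set.Ioc (0 : ℝ) 1)
    (M : ℕ)
    (hM : M = ((Finset.Icc 1 N).filter (fun j : ℕ => ((j : ℝ) - 1) / (N : ℝ) < a)).card) :
    |(∑ j ∈ Finset.Icc 1 N,
        Set.indicator (Set.Ico (0 : ℝ) a) (fun _ => (1 : ℝ)) (((j : ℝ) - 1) / N) *
        Set.indicator (Set.Ico (0 : ℝ) b) (fun _ => (1 : ℝ)) (x j)) / N - a * b|
      ≤ ((M : ℝ) / N) * discrep x M + 1 / N := by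
  have hN_pos : (0 : ℝ) < N := by exact_mod_cast hN
  have h_filter := filter_sub_one_div_lt hN ha.2
  have hM_ceil : M = ⌈a * N⌉₊ := by rw [hM, h_filter, Nat.card_Icc, Nat.add_sub_cancel]
  have haN_nonneg : 0 ≤ a * N := mul_nonneg ha.1.le hN_pos.le
  have hM_pos : (0 : ℝ) < M := by
    rw [hM_ceil, Nat.cast_pos, Nat.ceil_pos]
    exact mul_pos ha.1 hN_pos
  have h_sum : ∑ j ∈ Finset.Icc 1 N,
      Set.indicator (Set.Ico (0 : ℝ) a) (fun _ => (1 : ℝ)) (((j : ℝ) - 1) / N) *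
        Set.indicator (Set.Ico (0 : ℝ) b) (fun _ => (1 : ℝ)) (x j) =
      ∑ j ∈ Finset.Icc 1 M, Set.indicator (Set.Ico (0 : ℝ) b) (fun _ => (1 : ℝ)) (x j) := by
    rw [hM_ceil, ← h_filter, Finset.sum_filter]
    refine Finset.sum_congr rfl fun j hj => ?_
    have hj_one : (1 : ℝ) ≤ j := by exact_mod_cast (Finset.mem_Icc.1 hj).1
    have hj_nonneg : 0 ≤ ((j : ℝ) - 1) / N := div_nonneg (by linarith) hN_pos.le
    by_cases hja : ((j : ℝ) - 1) / N < a
    · rw [Set.indicator_of_mem (Set.mem_Ico.2 ⟨hj_nonneg, hja⟩), if_pos hja, one_mul]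
    · rw [Set.indicator_of_notMem fun h => hja h.2, if_neg hja, zero_mul]
  have h_discrep := abs_sub_le_discrep x M le_rfl hb.1 hb.2
  have hM_near : |(M : ℝ) / N - a| ≤ 1 / N := by
    have h_le := Nat.le_ceil (a * N)
    have h_lt := Nat.ceil_lt_add_one haN_nonneg
    rw [← hM_ceil] at h_le h_lt
    rw [div_sub' hN_pos.ne', abs_div, abs_of_pos hN_pos]
    gcongr
    rw [abs_le]
    constructor <;> linarith
  rw [h_sum]
  set s := ∑ j ∈ Finset.Icc 1 M, Set.indicator (Set.Ico (0 : ℝ) b) (fun _ => (1 : ℝ)) (x j)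
  have h_split : s / N - a * b = (M : ℝ) / N * (s / M - (b - 0)) + (M / N - a) * b := by
    field_simp
    ring
  calc |s / N - a * b|
      ≤ |(M : ℝ) / N * (s / M - (b - 0))| + |(M / N - a) * b| := by
        rw [h_split]
        exact abs_add_le _ _
    _ = (M : ℝ) / N * |s / M - (b - 0)| + |(M : ℝ) / N - a| * b := by
        rw [abs_mul, abs_mul, abs_of_pos hb.1, abs_of_pos (div_pos hM_pos hN_pos)]
    _ ≤ (M : ℝ) / N * discrep x M + 1 / N := by
        gcongr
        exact (mul_le_of_le_one_right (abs_nonneg _) hb.2).trans hM_near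
end
end
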